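/- For every α with 2 < α < 4, the Hausdorff dimension of the Koch curve K_α, the unique nonempty compact subset of ℂ satisfying K_α = ⋃_{i=1}^4 ψᵢ(K_α), equals d_f = (log 4)/(log α). -/

import Mathlib

/-- The rotation angle `θ(α) = arcsin(√(α(4-α))/2)` of the Koch-type family. -/
noncomputable def theta (α : ℝ) : ℝ := Real.arcsin (Real.sqrt (α * (4 - α)) / 2)

/-- The four contractive similitudes `ψ_{i,α}` of the Koch-type family, on `ℂ ≅ ℝ²`. -/
noncomputable def psi (α : ℝ) : Fin 4 → ℂ → ℂ
  | 0 => fun z => z / α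
  | 1 => fun z => (z / α) * Complex.exp (theta α * Complex.I) + 1 / α
  | 2 => fun z => (z / α) * Complex.exp (-(theta α) * Complex.I) + 1 / 2 +
      Complex.I * Real.sqrt (1 / α - 1 / 4)
  | 3 => fun z => (z - 1) / α + 1

/-!
If `N` similitudes of ratio `r` have attractor `K`, then covering `K` by its `N ^ n` cylinder sets
of level `n` bounds the `d`-dimensional Hausdorff measure of `K` as soon as `N * r ^ d = 1`.
Conversely, the uniform Bernoulli measure on infinite words, pushed to `K` by the coding map, gives
a set `s` mass at most `N ^ (-n)` times the number of level `n` cylinders it meets. If `s` has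
diameter at most `r ^ n`, the open set condition bounds that number independently of `n`: the
corresponding copies of a compact piece of the open set are disjoint and lie in a ball of radius
comparable to `r ^ n`, and each of them has volume comparable to that of the ball. The mass
distribution principle concludes. For the Koch curve, the open isosceles triangle spanned by its
generator satisfies the condition.
-/

open MeasureTheory Metric Set Filter Topology PiNat
open scoped ENNReal NNReal

lemma ennreal_pow_rpow_comm (x : ℝ≥0∞) (n : ℕ) (y : ℝ) : (x ^ n) ^ y = (x ^ y) ^ n := by
  rw [← ENNReal.rpow_natCast_mul, mul_comm, ENNReal.rpow_mul, ENNReal.rpow_natCast]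

section MassDistribution

variable {X : Type*} [MetricSpace X] [MeasurableSpace X] [BorelSpace X]

lemma le_dimH_of_measure_le_ediam_rpow {μ : Measure X} {K : Set X} {d : ℝ≥0} {c : ℝ≥0∞}
    (hK : μ K ≠ 0) (hc : c ≠ ∞) (h : ∀ s, ediam s ≤ 1 → μ s ≤ ediam s ^ (d : ℝ) * c) :
    d ≤ dimH K := by
  have hle : c⁻¹ • μ ≤ μH[d] := by
    refine Measure.le_hausdorffMeasure d _ 1 one_pos fun s hs ↦ ?_
    rw [Measure.smul_apply, smul_eq_mul, mul_comm, ← div_eq_mul_inv]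
    exact ENNReal.div_le_of_le_mul (h s hs)
  refine le_dimH_of_hausdorffMeasure_ne_zero (ne_bot_of_le_ne_bot ?_ (hle K))
  exact mul_ne_zero (ENNReal.inv_ne_zero.2 hc) hK

/- Between two consecutive scales `r ^ (n + 1)` and `r ^ n` one only loses the factor `r ^ d`;
sets of diameter zero are small at every scale, hence null. -/
lemma le_dimH_of_measure_le_pow {μ : Measure X} {K : Set X} {r d : ℝ≥0} {c : ℝ≥0∞}
    (hr₀ : r ≠ 0) (hr₁ : r < 1) (hK : μ K ≠ 0) (hc : c ≠ ∞)
    (h : ∀ (n : ℕ) (s : Set X), IsClosed s → ediam s ≤ r ^ n → μ s ≤ (r ^ (d : ℝ)) ^ n * c) :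
    d ≤ dimH K := by
  rcases eq_or_ne d 0 with rfl | hd
  · simp
  have hd' : 0 < (d : ℝ) := by positivity
  have h_closure : ∀ (n : ℕ) (s : Set X), ediam s ≤ r ^ n → μ s ≤ (r ^ (d : ℝ)) ^ n * c :=
    fun n s hs ↦ (measure_mono subset_closure).trans
      (h n _ isClosed_closure ((ediam_closure s).trans_le hs))
  have hrd : (r : ℝ≥0∞) ^ (d : ℝ) ≠ 0 := by simp [hr₀]
  refine le_dimH_of_measure_le_ediam_rpow (c := ((r : ℝ≥0∞) ^ (d : ℝ))⁻¹ * c) hK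
    (ENNReal.mul_ne_top (ENNReal.inv_ne_top.2 hrd) hc) fun s hs ↦ ?_
  rcases eq_or_ne (ediam s) 0 with hs₀ | hs₀
  · have hnull : Tendsto (fun n : ℕ ↦ ((r : ℝ≥0∞) ^ (d : ℝ)) ^ n * c) atTop (𝓝 (0 * c)) :=
      ENNReal.Tendsto.mul_const (ENNReal.tendsto_pow_atTop_nhds_zero_of_lt_one
        (ENNReal.rpow_lt_one (by exact_mod_cast hr₁) hd')) (Or.inr hc)
    rw [zero_mul] at hnull
    exact (ge_of_tendsto' hnull fun n ↦ h_closure n s (by simp [hs₀])).trans zero_le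
  · lift ediam s to ℝ≥0 using ne_top_of_le_ne_top ENNReal.one_ne_top hs with δ hδ
    obtain ⟨n, hn₁, hn₂⟩ := exists_nat_pow_near_of_lt_one (pos_iff_ne_zero.2 <| by simpa using hs₀)
      (by exact_mod_cast hs) (pos_iff_ne_zero.2 hr₀) hr₁
    calc μ s ≤ (r ^ (d : ℝ)) ^ n * c := h_closure n s (by rw [← hδ]; exact_mod_cast hn₂)
      _ = ((r : ℝ≥0∞) ^ (n + 1)) ^ (d : ℝ) * (((r : ℝ≥0∞) ^ (d : ℝ))⁻¹ * c) := by
        rw [ennreal_pow_rpow_comm, pow_succ, mul_assoc, ← mul_assoc (_ ^ (d : ℝ)),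
          ENNReal.mul_inv_cancel hrd (by simp), one_mul]
      _ ≤ (δ : ℝ≥0∞) ^ (d : ℝ) * (((r : ℝ≥0∞) ^ (d : ℝ))⁻¹ * c) := by
        gcongr
        exact_mod_cast hn₁.le

end MassDistribution

section Words

variable {ι X : Type*} {f : ι → X → X}

/-- The composition of the maps of an iterated function system along a word. The head of the list
is applied first, matching `PiNat.res`, which lists the letters of a prefix from last to first. -/
def wordMap (f : ι → X → X) : List ι → X → X
  | [] => id
  | i :: l => wordMap f l ∘ f i

lemma wordMap_injective (hf : ∀ i, Function.Injective (f i)) (l : List ι) :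
    Function.Injective (wordMap f l) := by
  induction l with
  | nil => exact Function.injective_id
  | cons i l ih => exact ih.comp (hf i)

lemma wordMap_cons_image_subset {K : Set X} (hK : ∀ i, MapsTo (f i) K K) (i : ι) (l : List ι) :
    wordMap f (i :: l) '' K ⊆ wordMap f l '' K := by
  rw [wordMap, image_comp]
  exact image_mono (hK i).image_subset

/-- The words of length `n` whose cylinder set in `K` meets `s`. -/
def wordsMeeting (f : ι → X → X) (K : Set X) (n : ℕ) (s : Set X) : Set (List ι) :=
  {l | l.length = n ∧ (wordMap f l '' K ∩ s).Nonempty}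

/-- The open set condition of Moran and Hutchinson, which controls the overlaps of the pieces of
an attractor. -/
def OpenSetCondition [TopologicalSpace X] (f : ι → X → X) : Prop :=
  ∃ V : Set X, IsOpen V ∧ V.Nonempty ∧ (∀ i, MapsTo (f i) V V) ∧
    Pairwise fun i j ↦ Disjoint (f i '' V) (f j '' V)

lemma disjoint_image_wordMap {V : Set X} (hf : ∀ i, Function.Injective (f i))
    (hV : ∀ i, MapsTo (f i) V V) (hdisj : Pairwise fun i j ↦ Disjoint (f i '' V) (f j '' V)) :
    ∀ {l m : List ι}, l.length = m.length → l ≠ m →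
      Disjoint (wordMap f l '' V) (wordMap f m '' V)
  | [], [], _, h => absurd rfl h
  | i :: l, j :: m, hlen, hne => by
    rcases eq_or_ne l m with rfl | hlm
    · simp only [wordMap, image_comp]
      exact (disjoint_image_iff (wordMap_injective hf l)).2 (hdisj fun hij ↦ hne (by rw [hij]))
    · exact (disjoint_image_wordMap hf hV hdisj (Nat.succ_injective hlen) hlm).mono
        (wordMap_cons_image_subset hV i l) (wordMap_cons_image_subset hV j m)

variable [MetricSpace X]

lemma lipschitzWith_wordMap {r : ℝ≥0} (hf : ∀ i, LipschitzWith r (f i)) (l : List ι) :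
    LipschitzWith (r ^ l.length) (wordMap f l) := by
  induction l with
  | nil => simpa [wordMap] using LipschitzWith.id
  | cons i l ih => simpa [wordMap, pow_succ] using ih.comp (hf i)

lemma ediam_image_wordMap_le {r : ℝ≥0} (hf : ∀ i, LipschitzWith r (f i)) (l : List ι) (K : Set X) :
    ediam (wordMap f l '' K) ≤ r ^ l.length * ediam K := by
  simpa using (lipschitzWith_wordMap hf l).ediam_image_le K

/-- `g` is a similitude of ratio `r`; it need not be surjective, and `r = 0` is allowed. -/
def IsSimilitude (r : ℝ≥0) (g : X → X) : Prop :=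
  ∀ x y, dist (g x) (g y) = r * dist x y

namespace IsSimilitude

variable {r : ℝ≥0} {g : X → X}

lemma lipschitzWith (hg : IsSimilitude r g) : LipschitzWith r g :=
  LipschitzWith.of_dist_le_mul fun x y ↦ (hg x y).le

lemma antilipschitzWith (hg : IsSimilitude r g) (hr : r ≠ 0) : AntilipschitzWith r⁻¹ g :=
  AntilipschitzWith.of_le_mul_dist fun x y ↦ by
    rw [hg, ← mul_assoc, ← NNReal.coe_mul, inv_mul_cancel₀ hr, NNReal.coe_one, one_mul]

lemma hausdorffMeasure_image [MeasurableSpace X] [BorelSpace X] (hg : IsSimilitude r g)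
    (hr : r ≠ 0) {d : ℝ} (hd : 0 ≤ d) (s : Set X) : μH[d] (g '' s) = r ^ d * μH[d] s := by
  refine (hg.lipschitzWith.hausdorffMeasure_image_le hd s).antisymm ?_
  have h := (hg.antilipschitzWith hr).le_hausdorffMeasure_image hd s
  rwa [ENNReal.coe_inv hr, ENNReal.inv_rpow, mul_comm, ← div_eq_mul_inv,
    ENNReal.le_div_iff_mul_le (by simp [hr]) (by simp [hd]), mul_comm] at h

end IsSimilitude

lemma isSimilitude_wordMap {r : ℝ≥0} (hf : ∀ i, IsSimilitude r (f i)) (l : List ι) :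
    IsSimilitude (r ^ l.length) (wordMap f l) := by
  induction l with
  | nil => intro x y; simp [wordMap]
  | cons i l ih =>
    intro x y
    rw [wordMap, Function.comp_apply, Function.comp_apply, ih, hf, List.length_cons, pow_succ]
    push_cast
    ring

/-- `K` is a nonempty compact set invariant under the iterated function system `f`. -/
structure IsAttractor (f : ι → X → X) (K : Set X) : Prop where
  nonempty : K.Nonempty
  isCompact : IsCompact K
  eq_iUnion_image : K = ⋃ i, f i '' K

namespace IsAttractor

variable {K : Set X} {r d : ℝ≥0}

lemma mapsTo (hK : IsAttractor f K) (i : ι) : MapsTo (f i) K K := by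
  rw [mapsTo_iff_image_subset]
  exact (subset_iUnion (fun i ↦ f i '' K) i).trans_eq hK.eq_iUnion_image.symm

lemma subset_iUnion_image_wordMap (hK : IsAttractor f K) (n : ℕ) :
    K ⊆ ⋃ w : List.Vector ι n, wordMap f w.1 '' K := by
  induction n with
  | zero => exact fun x hx ↦ mem_iUnion.2 ⟨List.Vector.nil, x, hx, rfl⟩
  | succ n ih =>
    intro x hx
    obtain ⟨w, y, hy, rfl⟩ := mem_iUnion.1 (ih hx)
    rw [hK.eq_iUnion_image] at hy
    obtain ⟨i, z, hz, rfl⟩ := mem_iUnion.1 hy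
    exact mem_iUnion.2 ⟨i ::ᵥ w, z, hz, rfl⟩

lemma tendsto_pow_mul_ediam (hK : IsAttractor f K) (hr : r < 1) :
    Tendsto (fun n : ℕ ↦ (r : ℝ≥0∞) ^ n * ediam K) atTop (𝓝 0) := by
  simpa using ENNReal.Tendsto.mul_const (ENNReal.tendsto_pow_atTop_nhds_zero_of_lt_one
    (by exact_mod_cast hr)) (Or.inr hK.isCompact.isBounded.ediam_ne_top)

theorem dimH_le [Fintype ι] (hK : IsAttractor f K) (hf : ∀ i, LipschitzWith r (f i)) (hr : r < 1)
    (hd : Fintype.card ι * r ^ (d : ℝ) ≤ 1) : dimH K ≤ d := by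
  borelize X
  have hediam_le (n : ℕ) (w : List.Vector ι n) :
      ediam (wordMap f w.1 '' K) ≤ r ^ n * ediam K := by
    simpa only [w.2] using ediam_image_wordMap_le hf w.1 K
  have hsum (n : ℕ) :
      ∑ w : List.Vector ι n, ediam (wordMap f w.1 '' K) ^ (d : ℝ) ≤ ediam K ^ (d : ℝ) := calc
    _ ≤ ∑ _w : List.Vector ι n, (r ^ n * ediam K) ^ (d : ℝ) := by gcongr; exact hediam_le n _
    _ = (Fintype.card ι * (r : ℝ≥0∞) ^ (d : ℝ)) ^ n * ediam K ^ (d : ℝ) := by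
      rw [Finset.sum_const, Finset.card_univ, card_vector, nsmul_eq_mul, Nat.cast_pow,
        ENNReal.mul_rpow_of_nonneg _ _ d.coe_nonneg, ennreal_pow_rpow_comm, mul_pow, mul_assoc]
    _ ≤ ediam K ^ (d : ℝ) := by
      refine mul_le_of_le_one_left' (pow_le_one' ?_ n)
      rw [← ENNReal.coe_rpow_of_nonneg _ d.coe_nonneg]
      exact_mod_cast hd
  refine dimH_le_of_hausdorffMeasure_ne_top (ne_top_of_le_ne_top
    (ENNReal.rpow_ne_top_of_nonneg d.coe_nonneg hK.isCompact.isBounded.ediam_ne_top) ?_)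
  calc μH[d] K
    _ ≤ liminf (fun n ↦ ∑ w : List.Vector ι n, ediam (wordMap f w.1 '' K) ^ (d : ℝ)) atTop :=
      Measure.hausdorffMeasure_le_liminf_sum d K _ (hK.tendsto_pow_mul_ediam hr) _
        (.of_forall hediam_le) (.of_forall hK.subset_iUnion_image_wordMap)
    _ ≤ liminf (fun _ : ℕ ↦ ediam K ^ (d : ℝ)) atTop := liminf_le_liminf (.of_forall hsum)
    _ = ediam K ^ (d : ℝ) := liminf_const _

theorem exists_continuous_coding [CompleteSpace X] [TopologicalSpace ι] [DiscreteTopology ι]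
    (hK : IsAttractor f K) (hf : ∀ i, LipschitzWith r (f i)) (hr : r < 1) :
    ∃ π : (ℕ → ι) → X, Continuous π ∧ ∀ x n, π x ∈ wordMap f (res x n) '' K := by
  let A : List ι → Set X := fun l ↦ wordMap f l '' K
  have hclosed (l : List ι) : IsClosed (A l) :=
    (hK.isCompact.image (lipschitzWith_wordMap hf l).continuous).isClosed
  have hanti : CantorScheme.ClosureAntitone A := CantorScheme.Antitone.closureAntitone
    (fun l i ↦ wordMap_cons_image_subset hK.mapsTo i l) hclosed
  have hdiam : CantorScheme.VanishingDiam A := fun x ↦ by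
    refine tendsto_of_tendsto_of_tendsto_of_le_of_le tendsto_const_nhds
      (hK.tendsto_pow_mul_ediam hr) (fun _ ↦ zero_le) fun n ↦ ?_
    simpa only [res_length] using ediam_image_wordMap_le hf (res x n) K
  have hdom (x : ℕ → ι) : x ∈ (CantorScheme.inducedMap A).1 := by
    rw [hanti.map_of_vanishingDiam hdiam fun l ↦ hK.nonempty.image _]
    exact mem_univ x
  exact ⟨fun x ↦ (CantorScheme.inducedMap A).2 ⟨x, hdom x⟩,
    hdiam.map_continuous.comp (by fun_prop), fun x n ↦ CantorScheme.map_mem ⟨x, hdom x⟩ n⟩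

end IsAttractor

lemma infinitePi_uniformOn_setOf_res_eq_le [Fintype ι] [Nonempty ι] [MeasurableSpace ι]
    [MeasurableSingletonClass ι] (l : List ι) :
    Measure.infinitePi (fun _ : ℕ ↦ ProbabilityTheory.uniformOn (univ : Set ι))
      {x | res x l.length = l} ≤ (Fintype.card ι : ℝ≥0∞)⁻¹ ^ l.length := by
  rcases eq_empty_or_nonempty {x : ℕ → ι | res x l.length = l} with h | ⟨x, hx : res x _ = l⟩
  · simp [h]
  have hcyl : {y | res y l.length = l} = cylinder x l.length := by
    rw [cylinder_eq_res, hx]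
  rw [hcyl, cylinder_eq_pi, Measure.infinitePi_pi _ fun _ _ ↦ measurableSet_singleton _]
  simp [ProbabilityTheory.uniformOn_univ]

theorem IsAttractor.exists_measure_le_card_wordsMeeting {K : Set X} {r : ℝ≥0} [Fintype ι]
    [CompleteSpace X] [MeasurableSpace X] [BorelSpace X]
    (hK : IsAttractor f K) (hf : ∀ i, LipschitzWith r (f i)) (hr : r < 1) :
    ∃ μ : Measure X, μ K = 1 ∧ ∀ (n : ℕ) (s : Set X), IsClosed s →
      μ s ≤ ENat.card (wordsMeeting f K n s) * (Fintype.card ι : ℝ≥0∞)⁻¹ ^ n := by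
  have : Nonempty ι := by
    obtain ⟨x, hx⟩ := hK.nonempty
    rw [hK.eq_iUnion_image] at hx
    exact ⟨(mem_iUnion.1 hx).choose⟩
  let : TopologicalSpace ι := ⊥
  have : DiscreteTopology ι := ⟨rfl⟩
  borelize ι
  obtain ⟨π, hπ, hmem⟩ := hK.exists_continuous_coding hf hr
  let P := Measure.infinitePi fun _ : ℕ ↦ ProbabilityTheory.uniformOn (univ : Set ι)
  refine ⟨P.map π, ?_, fun n s hs ↦ ?_⟩
  · have hpre : π ⁻¹' K = univ := eq_univ_of_forall fun x ↦ by
      simpa [wordMap] using hmem x 0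
    rw [Measure.map_apply hπ.measurable hK.isCompact.measurableSet, hpre, measure_univ]
  · have hcover : π ⁻¹' s ⊆ ⋃ l : wordsMeeting f K n s, {x | res x n = l} := fun x hx ↦
      mem_iUnion.2 ⟨⟨res x n, res_length x n, π x, hmem x n, hx⟩, rfl⟩
    calc P.map π s = P (π ⁻¹' s) := Measure.map_apply hπ.measurable hs.measurableSet
      _ ≤ ∑' l : wordsMeeting f K n s, P {x | res x n = l} :=
        (measure_mono hcover).trans (measure_iUnion_le _)
      _ ≤ ∑' _l : wordsMeeting f K n s, (Fintype.card ι : ℝ≥0∞)⁻¹ ^ n := by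
        refine ENNReal.tsum_le_tsum fun ⟨l, hl, _⟩ ↦ ?_
        subst hl
        exact infinitePi_uniformOn_setOf_res_eq_le l
      _ = _ := ENNReal.tsum_const _

end Words

section Packing

lemma image_wordMap_subset_closedBall {ι X : Type*} [MetricSpace X] {f : ι → X → X}
    {B K s : Set X} {r : ℝ≥0} {n : ℕ} {l : List ι} {u : X} (hf : ∀ i, IsSimilitude r (f i))
    (hBK : Bornology.IsBounded (B ∪ K)) (hs : ediam s ≤ r ^ n) (hl : l ∈ wordsMeeting f K n s)
    (hu : u ∈ s) : wordMap f l '' B ⊆ closedBall u (r ^ n * (diam (B ∪ K) + 1)) := by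
  rintro _ ⟨b, hb, rfl⟩
  obtain ⟨rfl, _, ⟨k, hk, rfl⟩, hks⟩ := hl
  have hbk : dist b k ≤ diam (B ∪ K) := dist_le_diam_of_mem hBK (Or.inl hb) (Or.inr hk)
  have hku : dist (wordMap f l k) u ≤ r ^ l.length := by
    have h := (edist_le_ediam_of_mem hks hu).trans hs
    rw [edist_nndist, ← ENNReal.coe_pow, ENNReal.coe_le_coe] at h
    exact_mod_cast h
  calc dist (wordMap f l b) u
    _ ≤ dist (wordMap f l b) (wordMap f l k) + dist (wordMap f l k) u := dist_triangle _ _ _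
    _ ≤ r ^ l.length * diam (B ∪ K) + r ^ l.length := by
      rw [isSimilitude_wordMap hf l b k, NNReal.coe_pow]
      gcongr
    _ = r ^ l.length * (diam (B ∪ K) + 1) := by ring

lemma card_wordsMeeting_mul_hausdorffMeasure_le {ι X : Type*} [MetricSpace X] [MeasurableSpace X]
    [BorelSpace X] {f : ι → X → X} {B K s : Set X} {r : ℝ≥0} {n : ℕ} {u : X} {d : ℝ}
    (hf : ∀ i, IsSimilitude r (f i)) (hr : r ≠ 0) (hd : 0 ≤ d) (hB : IsCompact B)
    (hK : Bornology.IsBounded K)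
    (hdisj : Pairwise fun l m : wordsMeeting f K n s ↦
      Disjoint (wordMap f l '' B) (wordMap f m '' B))
    (hs : ediam s ≤ r ^ n) (hu : u ∈ s) :
    ENat.card (wordsMeeting f K n s) * (((r : ℝ≥0∞) ^ n) ^ d * μH[d] B) ≤
      μH[d] (closedBall u (r ^ n * (diam (B ∪ K) + 1))) := by
  have hmeas (l : wordsMeeting f K n s) : MeasurableSet (wordMap f l '' B) :=
    (hB.image (isSimilitude_wordMap hf l).lipschitzWith.continuous).isClosed.measurableSet
  have hvol (l : wordsMeeting f K n s) :
      μH[d] (wordMap f l '' B) = ((r : ℝ≥0∞) ^ n) ^ d * μH[d] B := by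
    rw [(isSimilitude_wordMap hf l).hausdorffMeasure_image (pow_ne_zero _ hr) hd, l.2.1,
      ENNReal.coe_pow]
  calc ENat.card (wordsMeeting f K n s) * (((r : ℝ≥0∞) ^ n) ^ d * μH[d] B)
    _ = ∑' l : wordsMeeting f K n s, μH[d] (wordMap f l '' B) := by
      simp_rw [hvol, ENNReal.tsum_const]
    _ ≤ μH[d] (⋃ l : wordsMeeting f K n s, wordMap f l '' B) :=
      tsum_meas_le_meas_iUnion_of_disjoint _ hmeas hdisj
    _ ≤ _ := measure_mono (iUnion_subset fun l ↦
      image_wordMap_subset_closedBall hf (hB.isBounded.union hK) hs l.2 hu)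

variable {ι E : Type*} [NormedAddCommGroup E] [NormedSpace ℝ E] [FiniteDimensional ℝ E]
  {f : ι → E → E} {K : Set E} {r : ℝ≥0}

theorem exists_card_wordsMeeting_le (hf : ∀ i, IsSimilitude r (f i)) (hr : r ≠ 0)
    (hK : Bornology.IsBounded K) (hV : OpenSetCondition f) :
    ∃ c : ℝ≥0∞, c ≠ ∞ ∧ ∀ (n : ℕ) (s : Set E), ediam s ≤ r ^ n →
      ENat.card (wordsMeeting f K n s) ≤ c := by
  borelize E
  have := FiniteDimensional.proper ℝ E
  obtain ⟨V, hVo, ⟨x, hx⟩, hVmaps, hVdisj⟩ := hV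
  obtain ⟨B, hB, hxB, hBV⟩ := exists_compact_subset hVo hx
  let m := Module.finrank ℝ E
  have hμB : μH[m] B ≠ 0 := (Measure.measure_pos_of_nonempty_interior _ ⟨x, hxB⟩).ne'
  let R := diam (B ∪ K) + 1
  refine ⟨μH[m] (closedBall (0 : E) R) / μH[m] B,
    ENNReal.div_ne_top measure_closedBall_lt_top.ne hμB, fun n s hs ↦ ?_⟩
  rcases s.eq_empty_or_nonempty with rfl | ⟨u, hu⟩
  · simp [wordsMeeting]
  have hdisj : Pairwise fun l l' : wordsMeeting f K n s ↦
      Disjoint (wordMap f l '' B) (wordMap f l' '' B) := fun l l' hne ↦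
    (disjoint_image_wordMap (fun i ↦ ((hf i).antilipschitzWith hr).injective) hVmaps hVdisj
      (l.2.1.trans l'.2.1.symm) (Subtype.coe_ne_coe.2 hne)).mono (image_mono hBV) (image_mono hBV)
  have hball : μH[m] (closedBall u (r ^ n * R)) =
      ((r : ℝ≥0∞) ^ n) ^ (m : ℝ) * μH[m] (closedBall (0 : E) R) := by
    rw [Measure.addHaar_closedBall_mul _ u (by positivity) (by positivity), ENNReal.rpow_natCast,
      ENNReal.ofReal_pow (by positivity), ENNReal.ofReal_pow r.coe_nonneg,
      ENNReal.ofReal_coe_nnreal]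
  have hpack := card_wordsMeeting_mul_hausdorffMeasure_le hf hr m.cast_nonneg hB hK hdisj hs hu
  rw [hball, mul_left_comm] at hpack
  rw [ENNReal.le_div_iff_mul_le (Or.inl hμB) (Or.inl hB.measure_lt_top.ne)]
  exact (ENNReal.mul_le_mul_iff_right (by simp [hr]) (by simp)).1 hpack

/-- The Moran–Hutchinson dimension formula for equal contraction ratios. -/
theorem IsAttractor.dimH_eq [Fintype ι] {d : ℝ≥0} (hK : IsAttractor f K)
    (hf : ∀ i, IsSimilitude r (f i)) (hV : OpenSetCondition f) (hr₀ : r ≠ 0) (hr₁ : r < 1)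
    (hd : Fintype.card ι * r ^ (d : ℝ) = 1) : dimH K = d := by
  borelize E
  have hlip (i : ι) : LipschitzWith r (f i) := (hf i).lipschitzWith
  refine (hK.dimH_le hlip hr₁ hd.le).antisymm ?_
  obtain ⟨μ, hμK, hμ⟩ := hK.exists_measure_le_card_wordsMeeting hlip hr₁
  obtain ⟨c, hc, hcard⟩ := exists_card_wordsMeeting_le hf hr₀ hK.isCompact.isBounded hV
  have hinv : (Fintype.card ι : ℝ≥0∞)⁻¹ = r ^ (d : ℝ) := by
    rw [← ENNReal.coe_rpow_of_nonneg _ d.coe_nonneg]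
    exact (ENNReal.eq_inv_of_mul_eq_one_left (by rw [mul_comm]; exact_mod_cast hd)).symm
  refine le_dimH_of_measure_le_pow hr₀ hr₁ (hμK.trans_ne one_ne_zero) hc fun n s hs hdiam ↦ ?_
  calc μ s ≤ ENat.card (wordsMeeting f K n s) * (Fintype.card ι : ℝ≥0∞)⁻¹ ^ n := hμ n s hs
    _ ≤ (r ^ (d : ℝ)) ^ n * c := by
      rw [hinv, mul_comm]
      gcongr
      exact hcard n s hdiam

end Packing

section Koch

lemma isSimilitude_psi {α : ℝ} (hα : 0 ≤ α) (i : Fin 4) :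
    IsSimilitude α⁻¹.toNNReal (psi α i) := fun z w ↦ by
  obtain ⟨u, b, hu, hpsi⟩ : ∃ u b : ℂ, ‖u‖ = 1 ∧ ∀ z, psi α i z = z / α * u + b := by
    fin_cases i
    · exact ⟨1, 0, norm_one, fun z ↦ by simp [psi]⟩
    · exact ⟨_, _, Complex.norm_exp_ofReal_mul_I _, fun z ↦ rfl⟩
    · exact ⟨_, _, by exact_mod_cast Complex.norm_exp_ofReal_mul_I _, fun z ↦ add_assoc _ _ _⟩
    · exact ⟨1, 1 - 1 / α, norm_one, fun z ↦ by simp only [psi]; ring⟩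
  rw [hpsi, hpsi, dist_add_right, dist_eq_norm, ← sub_mul, ← sub_div, norm_mul, hu, mul_one,
    norm_div, Complex.norm_of_nonneg hα, Real.coe_toNNReal _ (inv_nonneg.2 hα), dist_eq_norm,
    div_eq_inv_mul]

lemma cos_theta {α : ℝ} (h₂ : 2 ≤ α) (h₄ : α ≤ 4) : Real.cos (theta α) = α / 2 - 1 := by
  have hsq : 1 - α * (4 - α) / 2 ^ 2 = (α / 2 - 1) ^ 2 := by ring
  rw [theta, Real.cos_arcsin, div_pow, Real.sq_sqrt (by nlinarith), hsq,
    Real.sqrt_sq (by linarith)]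

lemma sin_theta {α : ℝ} (h₀ : 0 < α) : Real.sin (theta α) = α * √(1 / α - 1 / 4) := by
  have hsq : α * (4 - α) = (2 * α) ^ 2 * (1 / α - 1 / 4) := by
    field_simp
    ring
  have hle : √(α * (4 - α)) ≤ 2 := by
    rw [Real.sqrt_le_left (by norm_num)]
    nlinarith [sq_nonneg (α - 2)]
  rw [theta, Real.sin_arcsin (by linarith [Real.sqrt_nonneg (α * (4 - α))]) (by linarith), hsq,
    Real.sqrt_mul (by positivity), Real.sqrt_sq (by positivity)]
  ring

/-- The maps `psi α` in Cartesian coordinates, with `a = 1 / α` and `h = √(a - 1 / 4)` the height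
of the apex of the generator. -/
noncomputable def kochMap (a h : ℝ) : Fin 4 → ℂ → ℂ
  | 0 => fun z ↦ ⟨a * z.re, a * z.im⟩
  | 1 => fun z ↦ ⟨a + (1 / 2 - a) * z.re - h * z.im, h * z.re + (1 / 2 - a) * z.im⟩
  | 2 => fun z ↦ ⟨1 / 2 + (1 / 2 - a) * z.re + h * z.im, h - h * z.re + (1 / 2 - a) * z.im⟩
  | 3 => fun z ↦ ⟨1 - a + a * z.re, a * z.im⟩

lemma psi_eq_kochMap {α : ℝ} (h₂ : 2 ≤ α) (h₄ : α ≤ 4) :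
    psi α = kochMap (1 / α) √(1 / α - 1 / 4) := by
  have h₀ : α ≠ 0 := by positivity
  have hcos := cos_theta h₂ h₄
  have hsin := sin_theta (by positivity : 0 < α)
  have hexp_re : (Complex.exp (-theta α * Complex.I)).re = α / 2 - 1 := by
    rw [← Complex.ofReal_neg, Complex.exp_ofReal_mul_I_re, Real.cos_neg, hcos]
  have hexp_im : (Complex.exp (-theta α * Complex.I)).im = -(α * √(1 / α - 1 / 4)) := by
    rw [← Complex.ofReal_neg, Complex.exp_ofReal_mul_I_im, Real.sin_neg, hsin]
  have hinv : (1 / (α : ℂ)) = (1 / α : ℝ) := by push_cast; rfl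
  funext i z
  fin_cases i <;> apply Complex.ext <;>
    simp only [psi, kochMap, hinv, hexp_re, hexp_im, hcos, hsin, Complex.div_ofReal_re,
      Complex.div_ofReal_im, Complex.add_re, Complex.add_im, Complex.mul_re, Complex.mul_im,
      Complex.sub_re, Complex.sub_im, Complex.ofReal_re, Complex.ofReal_im,
      Complex.exp_ofReal_mul_I_re, Complex.exp_ofReal_mul_I_im, Complex.I_re, Complex.I_im,
      Complex.one_re, Complex.one_im] <;>
    field_simp <;> norm_num <;> ring

/-- The open isosceles triangle with vertices `0`, `1` and `1 / 2 + h * I`. -/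
def openTriangle (h : ℝ) : Set ℂ :=
  {z | 0 < z.im ∧ z.im < 2 * h * z.re ∧ z.im < 2 * h * (1 - z.re)}

lemma isOpen_openTriangle (h : ℝ) : IsOpen (openTriangle h) :=
  (isOpen_lt continuous_const Complex.continuous_im).and
    ((isOpen_lt Complex.continuous_im (continuous_const.mul Complex.continuous_re)).and
      (isOpen_lt Complex.continuous_im
        (continuous_const.mul (continuous_const.sub Complex.continuous_re))))

lemma openTriangle_nonempty {h : ℝ} (hh : 0 < h) : (openTriangle h).Nonempty :=
  ⟨⟨1 / 2, h / 2⟩, by dsimp; linarith, by dsimp; linarith, by dsimp; linarith⟩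

/-- Four regions separating the images of `openTriangle h` under the maps `kochMap a h i`. They are
cut out by the axis of the triangle and by the lines through `a` and `1 - a` perpendicular to its
left and right edges. -/
def kochRegion (a h : ℝ) : Fin 4 → Set ℂ
  | 0 => {z | z.re < 1 / 2 ∧ z.re / 2 + h * z.im < a / 2}
  | 1 => {z | z.re < 1 / 2 ∧ a / 2 < z.re / 2 + h * z.im}
  | 2 => {z | 1 / 2 < z.re ∧ a / 2 < (1 - z.re) / 2 + h * z.im}
  | 3 => {z | 1 / 2 < z.re ∧ (1 - z.re) / 2 + h * z.im < a / 2}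

lemma pairwise_disjoint_kochRegion (a h : ℝ) :
    Pairwise fun i j ↦ Disjoint (kochRegion a h i) (kochRegion a h j) := fun i j hij ↦ by
  refine Set.disjoint_left.2 fun z hi hj ↦ ?_
  fin_cases i <;> fin_cases j <;> first
    | exact hij rfl
    | exact lt_asymm hi.1 hj.1
    | exact lt_asymm hi.2 hj.2

variable {a h : ℝ}

lemma mapsTo_kochMap_openTriangle (ha : a ≤ 1 / 2) (hah : h ^ 2 = a - 1 / 4) (i : Fin 4) :
    MapsTo (kochMap a h i) (openTriangle h) (openTriangle h) := by
  rintro ⟨x, y⟩ ⟨hbase, hleft, hright⟩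
  dsimp only at hbase hleft hright
  have ha₀ : 0 < a := by linarith [sq_nonneg h]
  have hhy : h ^ 2 * y = (a - 1 / 4) * y := by rw [hah]
  -- The defining forms of the triangle at the image are nonnegative combinations of these.
  have hbase_a := mul_pos ha₀ hbase
  have hbase_a' := mul_nonneg (by linarith : 0 ≤ 1 / 2 - a) hbase.le
  have hleft_a := mul_pos ha₀ (sub_pos.2 hleft)
  have hleft_a' := mul_pos (by linarith : 0 < 1 - a) (sub_pos.2 hleft)
  have hright_a := mul_pos ha₀ (sub_pos.2 hright)
  have hright_a' := mul_pos (by linarith : 0 < 1 - a) (sub_pos.2 hright)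
  fin_cases i <;> refine ⟨?_, ?_, ?_⟩ <;> dsimp only [kochMap] <;> linarith

lemma mapsTo_kochMap_kochRegion (hh : 0 < h) (ha : a ≤ 1 / 2) (hah : h ^ 2 = a - 1 / 4)
    (i : Fin 4) : MapsTo (kochMap a h i) (openTriangle h) (kochRegion a h i) := by
  rintro ⟨x, y⟩ ⟨hbase, hleft, hright⟩
  dsimp only at hbase hleft hright
  have ha₀ : 0 < a := by linarith [sq_nonneg h]
  have hx₀ : 0 < x := pos_of_mul_pos_right (hbase.trans hleft) (by positivity)
  have hx₁ : 0 < 1 - x := pos_of_mul_pos_right (hbase.trans hright) (by positivity)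
  have hhx : h ^ 2 * x = (a - 1 / 4) * x := by rw [hah]
  have hhy : 0 < h * y := mul_pos hh hbase
  -- As `h ^ 2 ≤ 1 / 4`, the edges have slope `2 * h ≤ 1`.
  have hleft' : 0 < x / 2 - h * y := by nlinarith
  have hright' : 0 < (1 - x) / 2 - h * y := by nlinarith
  have hx₀_a := mul_pos ha₀ hx₀
  have hx₁_a := mul_pos ha₀ hx₁
  have hx₀_a' := mul_nonneg (by linarith : 0 ≤ 1 / 2 - a) hx₀.le
  have hx₁_a' := mul_nonneg (by linarith : 0 ≤ 1 / 2 - a) hx₁.le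
  have hleft_a := mul_pos ha₀ hleft'
  have hright_a := mul_pos ha₀ hright'
  fin_cases i <;> refine ⟨?_, ?_⟩ <;> dsimp only [kochMap] <;> linarith

theorem openSetCondition_psi {α : ℝ} (h₂ : 2 ≤ α) (h₄ : α < 4) : OpenSetCondition (psi α) := by
  have hquarter : 1 / 4 < 1 / α := one_div_lt_one_div_of_lt (by positivity) h₄
  have hhalf : 1 / α ≤ 1 / 2 := one_div_le_one_div_of_le two_pos h₂
  have hh : 0 < √(1 / α - 1 / 4) := Real.sqrt_pos.2 (sub_pos.2 hquarter)
  have hsq : √(1 / α - 1 / 4) ^ 2 = 1 / α - 1 / 4 := Real.sq_sqrt (sub_pos.2 hquarter).le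
  rw [psi_eq_kochMap h₂ h₄.le]
  exact ⟨openTriangle _, isOpen_openTriangle _, openTriangle_nonempty hh,
    mapsTo_kochMap_openTriangle hhalf hsq, fun i j hij ↦
      (pairwise_disjoint_kochRegion _ _ hij).mono
        (mapsTo_kochMap_kochRegion hh hhalf hsq i).image_subset
        (mapsTo_kochMap_kochRegion hh hhalf hsq j).image_subset⟩

end Koch

theorem stmt_5_general (α : ℝ) (hα : 2 ≤ α ∧ α < 4) (K : Set ℂ)
    (hK : K.Nonempty ∧ IsCompact K ∧ K = ⋃ i : Fin 4, psi α i '' K) :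
    dimH K = ENNReal.ofReal (Real.log 4 / Real.log α) := by
  obtain ⟨h₂, h₄⟩ := hα
  have hattr : IsAttractor (psi α) K := ⟨hK.1, hK.2.1, hK.2.2⟩
  have hratio : α⁻¹ < 1 := inv_lt_one_of_one_lt₀ (by linarith)
  have hdim : 0 ≤ Real.log 4 / Real.log α :=
    div_nonneg (Real.log_nonneg (by norm_num)) (Real.log_nonneg (by linarith))
  have hmoran : 4 * α⁻¹ ^ (Real.log 4 / Real.log α) = 1 := by
    rw [Real.log_div_log, Real.inv_rpow (by positivity),
      Real.rpow_logb (by positivity) (by linarith) four_pos, mul_inv_cancel₀ four_ne_zero]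
  refine hattr.dimH_eq (isSimilitude_psi (by positivity)) (openSetCondition_psi h₂ h₄)
    (Real.toNNReal_pos.2 (by positivity)).ne' (by simpa using hratio) (NNReal.coe_injective ?_)
  push_cast
  rwa [Real.coe_toNNReal _ hdim, Real.coe_toNNReal _ (by positivity), Fintype.card_fin]

/-- The Hausdorff dimension of the Koch curve `K_α`, the unique nonempty compact set
invariant under `Ψ_α`, equals `log 4 / log α`. -/
theorem stmt_5 (α : ℝ) (hα : 2 < α ∧ α < 4) (K : Set ℂ)
    (hK : K.Nonempty ∧ IsCompact K ∧ K = ⋃ i : Fin 4, psi α i '' K) :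
    dimH K = ENNReal.ofReal (Real.log 4 / Real.log α) :=
  stmt_5_general α ⟨hα.1.le, hα.2⟩ K hK
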